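/- arXiv:2208.04802 — 4 statements merged into one kernel-verified Lean document; each statement's English description precedes it below -/
import Mathlib

section
/- Every result tree reported by the GAM algorithm is minimal in the sense of the CTP result definition, i.e., removing any edge disconnects the tree or removes a seed, and the tree contains exactly one node from each seed set; hence GAM never needs to minimize the results it finds. -/
/-!
Why results need no minimization. Every GAM tree satisfies a structural invariant (`GAMInv`), proved
by induction on its provenance (`gamInv_of_valid`): it is a tree, it has at most one node in each
seed set, and every edge `e` cuts off, on the side away from the root, a set of nodes containing a
seed. For this last point, `Grow` cuts the whole old tree (which has a seed) off the new root, and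
`Merge` leaves the part of one tree away from the common root untouched by the other.

Hence if an edge `e` of a result is removed and the remainder is still connected, it cannot contain
both the root and the seed on the far side of `e`: one of the two has been removed. It remains to
see that losing the root is harmless (`root_seed_or_survives`). If the last step is `Grow`, the
smaller tree was not yet a result, so the new root supplies a missing seed set and is itself a seed.
If it is `Merge`, both parts are nonempty (the common root cannot be a seed, because the two parts
satisfy disjoint sets of seed sets) and edge-disjoint, so the root survives the removal of one edge.
-/

/-! Framework for formalizing connecting-tree-pattern (CTP) search algorithms
(GAM, ESP, LESP, MoESP, MoLESP) over undirected multigraphs. -/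

/-- An undirected multigraph: each edge has an unordered pair of endpoints. -/
structure Multigraph (V : Type*) (E : Type*) where
  ends : E → Sym2 V

namespace CTP

variable {V : Type*} {E : Type*}

/-- `v` is a seed: it belongs to some seed set. -/
def isSeed {m : ℕ} (S : Fin m → Set V) (v : V) : Prop := ∃ i, v ∈ S i

/-- The set of nodes touched by an edge set. -/
def nodeSet (G : Multigraph V E) (T : Finset E) : Set V := {v | ∃ e ∈ T, v ∈ G.ends e}

/-- The number of edges of `T` adjacent to `v`. -/
noncomputable def deg (G : Multigraph V E) (v : V) (T : Finset E) : ℕ :=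
  Set.ncard {e | e ∈ T ∧ v ∈ G.ends e}

/-- `v` is a leaf of the edge set `T`: it is adjacent to exactly one edge of `T`. -/
def IsLeaf (G : Multigraph V E) (T : Finset E) (v : V) : Prop := deg G v T = 1

/-- `v` has at least three adjacent edges in `G`. -/
def HasDegThree (G : Multigraph V E) (v : V) : Prop :=
  ∃ e₁ e₂ e₃ : E, e₁ ≠ e₂ ∧ e₁ ≠ e₃ ∧ e₂ ≠ e₃ ∧
    v ∈ G.ends e₁ ∧ v ∈ G.ends e₂ ∧ v ∈ G.ends e₃

/-- All nodes touched by `T` are pairwise connected by edges of `T`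
(edges are traversed in either direction). -/
def connectedEdges (G : Multigraph V E) (T : Finset E) : Prop :=
  ∀ x ∈ nodeSet G T, ∀ y ∈ nodeSet G T,
    Relation.ReflTransGen (fun a b => ∃ e ∈ T, G.ends e = s(a, b)) x y

/-- The edge set `T` forms a tree (connected and acyclic). -/
def IsTreeEdges (G : Multigraph V E) (T : Finset E) : Prop :=
  connectedEdges G T ∧ (T.Nonempty → (nodeSet G T).ncard = T.card + 1)

/-- Nodes of a rooted edge set: just the root, if there are no edges. -/
def nodesIn (G : Multigraph V E) (T : Finset E) (r : V) : Set V :=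
  {v | (T = ∅ ∧ v = r) ∨ v ∈ nodeSet G T}

/-- sat: the indices of the seed sets having a seed in the rooted edge set. -/
def satIn {m : ℕ} (G : Multigraph V E) (S : Fin m → Set V) (T : Finset E) (r : V) :
    Set (Fin m) := {i | ∃ v ∈ nodesIn G T r, v ∈ S i}

/-- A rooted tree: a set of edges plus a distinguished root node. -/
structure RTree (V : Type*) (E : Type*) where
  edges : Finset E
  root : V

/-- Nodes of a rooted tree. -/
def RTree.nodes (G : Multigraph V E) (t : RTree V E) : Set V := nodesIn G t.edges t.root

/-- The rooted tree is well-formed in `G`. -/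
def RTree.Valid (G : Multigraph V E) (t : RTree V E) : Prop :=
  IsTreeEdges G t.edges ∧ (t.edges.Nonempty → t.root ∈ nodeSet G t.edges)

/-- A CTP result: a minimal subtree of `G` containing a node from each seed set:
(i) it contains exactly one node from each `S i`, and (ii) removing any edge
disconnects it or removes some seed. -/
def IsCTPResult {m : ℕ} [DecidableEq E] (G : Multigraph V E) (S : Fin m → Set V)
    (t : RTree V E) : Prop :=
  t.Valid G ∧
  (∀ i, ∃! v, v ∈ t.nodes G ∧ v ∈ S i) ∧
  (∀ e ∈ t.edges, ¬ connectedEdges G (t.edges.erase e) ∨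
    ∃ i, ∃ v ∈ S i, v ∈ t.nodes G ∧ v ∉ nodeSet G (t.edges.erase e))

/-- The edge set `T` forms a path: a tree in which every node has degree at most 2. -/
def IsPathEdges (G : Multigraph V E) (T : Finset E) : Prop :=
  IsTreeEdges G T ∧ ∀ v ∈ nodeSet G T, deg G v T ≤ 2

/-- An `(n,s)`-rooted path: a rooted path from a seed `s` to a root node `n`,
whose only seed is `s`. -/
def IsNSPath {m : ℕ} (G : Multigraph V E) (S : Fin m → Set V) (T : Finset E)
    (n s : V) : Prop :=
  IsPathEdges G T ∧ isSeed S s ∧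
  ((T = ∅ ∧ n = s) ∨
    (T ≠ ∅ ∧ s ≠ n ∧ s ∈ nodeSet G T ∧ n ∈ nodeSet G T ∧ IsLeaf G T s ∧ IsLeaf G T n)) ∧
  (∀ v ∈ nodesIn G T n, isSeed S v → v = s)

/-- A simple edge set: a tree whose leaves are exactly its seed nodes
(all leaves are seeds, all internal nodes are non-seeds). -/
def IsSimpleEdgeSet {m : ℕ} (G : Multigraph V E) (S : Fin m → Set V) (T : Finset E) : Prop :=
  IsTreeEdges G T ∧ ∀ v ∈ nodeSet G T, (IsLeaf G T v ↔ isSeed S v)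

/-- The number of leaves of an edge set. -/
noncomputable def leafCount (G : Multigraph V E) (T : Finset E) : ℕ :=
  Set.ncard {v ∈ nodeSet G T | IsLeaf G T v}

/-- A `p`-simple edge set: a simple edge set with at most `p` leaves. -/
def pSimple {m : ℕ} (G : Multigraph V E) (S : Fin m → Set V) (T : Finset E) (p : ℕ) : Prop :=
  IsSimpleEdgeSet G S T ∧ leafCount G T ≤ p

/-- A simple tree decomposition of the edge set `T`: a set of nonempty simple
edge sets partitioning the edges of `T` (they may share leaf nodes). -/
def IsSimpleDecomp {m : ℕ} (G : Multigraph V E) (S : Fin m → Set V) (T : Finset E)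
    (θ : Set (Finset E)) : Prop :=
  (∀ P ∈ θ, P.Nonempty ∧ IsSimpleEdgeSet G S P ∧ P ⊆ T) ∧
  (∀ e ∈ T, ∃! P, P ∈ θ ∧ e ∈ P)

/-- `T` is `p`-piecewise simple: its simple tree decomposition exists and
consists of `p`-simple edge sets. -/
def IsPPS {m : ℕ} (G : Multigraph V E) (S : Fin m → Set V) (T : Finset E) (p : ℕ) : Prop :=
  ∃ θ, IsSimpleDecomp G S T θ ∧ ∀ P ∈ θ, leafCount G P ≤ p

/-- A `(u,n)` rooted merge: the rooted tree obtained by merging `u`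
`(n,sⱼ)`-rooted paths at the non-seed node `n`; the paths share no node but `n`,
and their seeds come from pairwise distinct seed sets. -/
def IsURootedMerge {m : ℕ} [DecidableEq E] (G : Multigraph V E) (S : Fin m → Set V)
    (u : ℕ) (T : Finset E) (n : V) : Prop :=
  ¬ isSeed S n ∧
  ∃ (P : Fin u → Finset E) (s : Fin u → V),
    (∀ j, IsNSPath G S (P j) n (s j)) ∧
    (∀ j k, j ≠ k → nodesIn G (P j) n ∩ nodesIn G (P k) n ⊆ {n}) ∧
    (∀ j k, j ≠ k → ∀ i, ¬ (s j ∈ S i ∧ s k ∈ S i)) ∧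
    T = Finset.univ.biUnion P

/-- Provenances: the ways the algorithms build rooted trees.
`grow t e x` grows `t` from its root along edge `e` to the new root `x`;
`merge t₁ t₂` merges two trees with the same root; `mo t r` re-roots `t`
at the seed node `r` (MoESP trees). -/
inductive Prov (V : Type*) (E : Type*) : Type _ where
  | init : V → Prov V E
  | grow : Prov V E → E → V → Prov V E
  | merge : Prov V E → Prov V E → Prov V E
  | mo : Prov V E → V → Prov V E

namespace Prov

/-- The root of (the rooted tree of) a provenance. -/
def root : Prov V E → V
  | init x => x
  | grow _ _ x => x
  | merge t₁ _ => t₁.root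
  | mo _ r => r

/-- The edge set of a provenance. -/
def edges [DecidableEq E] : Prov V E → Finset E
  | init _ => ∅
  | grow t e _ => insert e (edges t)
  | merge t₁ t₂ => edges t₁ ∪ edges t₂
  | mo t _ => edges t

/-- The node set of a provenance. -/
def nodes (G : Multigraph V E) : Prov V E → Set V
  | init x => {x}
  | grow t _ x => insert x (nodes G t)
  | merge t₁ t₂ => nodes G t₁ ∪ nodes G t₂
  | mo t _ => nodes G t

/-- The provenance contains an `mo` (MoESP re-rooting) step. -/
def hasMo : Prov V E → Prop
  | init _ => False
  | grow t _ _ => hasMo t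
  | merge t₁ t₂ => hasMo t₁ ∨ hasMo t₂
  | mo _ _ => True

/-- The top operation of the provenance is `mo`. -/
def isMoTop : Prov V E → Prop
  | mo _ _ => True
  | _ => False

/-- The top operation of the provenance is `merge` (a "Merge tree"). -/
def isMergeTop : Prov V E → Prop
  | merge _ _ => True
  | _ => False

/-- The immediate sub-provenances. -/
def children : Prov V E → List (Prov V E)
  | init _ => []
  | grow t _ _ => [t]
  | merge t₁ t₂ => [t₁, t₂]
  | mo t _ => [t]

end Prov

/-- sat of a provenance: the seed sets having a seed among its nodes. -/
def satP {m : ℕ} (G : Multigraph V E) (S : Fin m → Set V) (t : Prov V E) : Set (Fin m) :=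
  {i | ∃ v ∈ t.nodes G, v ∈ S i}

/-- The provenance (a grow or merge) has strictly more seeds than any of its children. -/
def SeedGain {m : ℕ} (G : Multigraph V E) (S : Fin m → Set V) : Prov V E → Prop
  | .init _ => False
  | .grow t e x => (satP G S t).ncard < (satP G S (.grow t e x)).ncard
  | .merge t₁ t₂ => (satP G S t₁).ncard < (satP G S (.merge t₁ t₂)).ncard ∧
      (satP G S t₂).ncard < (satP G S (.merge t₁ t₂)).ncard
  | .mo _ _ => False

/-- Validity of a provenance w.r.t. graph `G` and seed sets `S`:
* `init x` for a seed `x`;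
* `grow t e x`: `e` goes from `t`'s root to `x`, `x` is not in `t`, `x` is not a
  seed from a set in sat(`t`), `t` is not a result yet, and Grow is disabled on
  MoESP trees;
* `merge t₁ t₂`: same root, no other common node, disjoint sats;
* `mo t r`: re-rooting at a seed node `r` ≠ root, when `t` gained seeds. -/
inductive ValidProv {m : ℕ} (G : Multigraph V E) (S : Fin m → Set V) : Prov V E → Prop where
  | init {x : V} {i : Fin m} (h : x ∈ S i) : ValidProv G S (.init x)
  | grow {t : Prov V E} {e : E} {x : V} (ht : ValidProv G S t)
      (he : G.ends e = s(t.root, x)) (hx : x ∉ t.nodes G)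
      (hs : ¬ ∃ i ∈ satP G S t, x ∈ S i)
      (hnotfull : ¬ ∀ i : Fin m, i ∈ satP G S t)
      (hmo : ¬ t.hasMo) : ValidProv G S (.grow t e x)
  | merge {t₁ t₂ : Prov V E} (h₁ : ValidProv G S t₁) (h₂ : ValidProv G S t₂)
      (hr : t₁.root = t₂.root) (hn : t₁.nodes G ∩ t₂.nodes G ⊆ {t₁.root})
      (hs : satP G S t₁ ∩ satP G S t₂ = ∅) : ValidProv G S (.merge t₁ t₂)
  | mo {t : Prov V E} {r : V} (ht : ValidProv G S t) (hr : r ∈ t.nodes G)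
      (hseed : isSeed S r) (hne : r ≠ t.root) (hgain : SeedGain G S t) :
      ValidProv G S (.mo t r)

/-- The common part of an execution of the algorithms: the set `built` of all
provenances built (and kept) during the run, together with their build times.
Children of built trees were built earlier, `Init` trees are built for all
seeds, and build times are distinct. -/
structure PreRun {m : ℕ} (G : Multigraph V E) (S : Fin m → Set V) where
  built : Set (Prov V E)
  time : Prov V E → ℕ
  hvalid : ∀ t ∈ built, ValidProv G S t
  hchild : ∀ t ∈ built, ∀ c ∈ t.children, c ∈ built ∧ time c < time t
  htime : ∀ t₁ ∈ built, ∀ t₂ ∈ built, time t₁ = time t₂ → t₁ = t₂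
  hinit : ∀ x : V, isSeed S x → Prov.init x ∈ built

/-- Seed signature of node `n` at time `τ`: the seed sets `S i` such that an
`(n,sᵢ)`-rooted path from a seed `sᵢ ∈ S i` has been built before `τ`. -/
def ssAt {m : ℕ} [DecidableEq E] {G : Multigraph V E} {S : Fin m → Set V}
    (R : PreRun G S) (τ : ℕ) (n : V) : Set (Fin m) :=
  {i | ∃ p ∈ R.built, R.time p < τ ∧ p.root = n ∧
    ∃ s ∈ S i, IsNSPath G S (Prov.edges p) n s}

/-- An execution of GAM, given unbounded time: no MoESP trees; at most one
provenance per rooted tree (edge set plus root) is kept; and fairness: every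
valid Grow/Merge opportunity from built trees leads to a built provenance with
the produced rooted tree. -/
structure GAMRun {m : ℕ} [DecidableEq E] (G : Multigraph V E) (S : Fin m → Set V)
    extends PreRun G S where
  hnomo : ∀ t ∈ built, ¬ t.hasMo
  hdedup : ∀ t₁ ∈ built, ∀ t₂ ∈ built,
    Prov.edges t₁ = Prov.edges t₂ → t₁.root = t₂.root → t₁ = t₂
  hgrow : ∀ t ∈ built, ∀ e x, ValidProv G S (.grow t e x) →
    ∃ t' ∈ built, Prov.edges t' = insert e (Prov.edges t) ∧ t'.root = x
  hmerge : ∀ t₁ ∈ built, ∀ t₂ ∈ built, ValidProv G S (.merge t₁ t₂) →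
    ∃ t' ∈ built, Prov.edges t' = Prov.edges t₁ ∪ Prov.edges t₂ ∧ t'.root = t₁.root

/-- An execution of ESP (GAM with edge-set pruning): at most one provenance per
nonempty edge set is kept; fairness only guarantees some built provenance with
the produced edge set (possibly rooted elsewhere). -/
structure ESPRun {m : ℕ} [DecidableEq E] (G : Multigraph V E) (S : Fin m → Set V)
    extends PreRun G S where
  hnomo : ∀ t ∈ built, ¬ t.hasMo
  hdedup : ∀ t₁ ∈ built, ∀ t₂ ∈ built,
    Prov.edges t₁ = Prov.edges t₂ → (Prov.edges t₁).Nonempty → t₁ = t₂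
  hgrow : ∀ t ∈ built, ∀ e x, ValidProv G S (.grow t e x) →
    ∃ t' ∈ built, Prov.edges t' = insert e (Prov.edges t)
  hmerge : ∀ t₁ ∈ built, ∀ t₂ ∈ built, ValidProv G S (.merge t₁ t₂) →
    ∃ t' ∈ built, Prov.edges t' = Prov.edges t₁ ∪ Prov.edges t₂

/-- An execution of LESP (ESP with limited edge-set pruning): a duplicate
(same nonempty edge set) is kept only if it is a Merge tree rooted at a node
whose seed signature has at least 3 bits set and that has at least 3 adjacent
edges in `G`; conversely, a Merge opportunity whose root satisfies the
exemption condition at the time it is attempted is never pruned. -/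
structure LESPRun {m : ℕ} [DecidableEq E] (G : Multigraph V E) (S : Fin m → Set V)
    extends PreRun G S where
  hnomo : ∀ t ∈ built, ¬ t.hasMo
  hdedup : ∀ t₁ ∈ built, ∀ t₂ ∈ built,
    Prov.edges t₁ = Prov.edges t₂ → (Prov.edges t₁).Nonempty → time t₁ < time t₂ →
    t₂.isMergeTop ∧ 3 ≤ (ssAt toPreRun (time t₂) t₂.root).ncard ∧ HasDegThree G t₂.root
  hgrow : ∀ t ∈ built, ∀ e x, ValidProv G S (.grow t e x) →
    ∃ t' ∈ built, Prov.edges t' = insert e (Prov.edges t)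
  hmerge : ∀ t₁ ∈ built, ∀ t₂ ∈ built, ValidProv G S (.merge t₁ t₂) →
    ∃ t' ∈ built, Prov.edges t' = Prov.edges t₁ ∪ Prov.edges t₂
  hmergeExempt : ∀ t₁ ∈ built, ∀ t₂ ∈ built, ValidProv G S (.merge t₁ t₂) →
    3 ≤ (ssAt toPreRun (max (time t₁) (time t₂) + 1) t₁.root).ncard →
    HasDegThree G t₁.root → Prov.merge t₁ t₂ ∈ built

/-- An execution of MoESP (ESP plus MoESP re-rooted trees): edge-set pruning
applies only to non-`mo` trees; every valid MoESP re-rooting of a built tree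
is built. -/
structure MoESPRun {m : ℕ} [DecidableEq E] (G : Multigraph V E) (S : Fin m → Set V)
    extends PreRun G S where
  hdedup : ∀ t₁ ∈ built, ∀ t₂ ∈ built, ¬ t₁.isMoTop → ¬ t₂.isMoTop →
    Prov.edges t₁ = Prov.edges t₂ → (Prov.edges t₁).Nonempty → t₁ = t₂
  hgrow : ∀ t ∈ built, ∀ e x, ValidProv G S (.grow t e x) →
    ∃ t' ∈ built, Prov.edges t' = insert e (Prov.edges t)
  hmerge : ∀ t₁ ∈ built, ∀ t₂ ∈ built, ValidProv G S (.merge t₁ t₂) →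
    ∃ t' ∈ built, Prov.edges t' = Prov.edges t₁ ∪ Prov.edges t₂
  hmo : ∀ t ∈ built, ∀ r, ValidProv G S (.mo t r) → Prov.mo t r ∈ built

/-- An execution of MoLESP: ESP with both the MoESP and the LESP modifications. -/
structure MoLESPRun {m : ℕ} [DecidableEq E] (G : Multigraph V E) (S : Fin m → Set V)
    extends PreRun G S where
  hdedup : ∀ t₁ ∈ built, ∀ t₂ ∈ built, ¬ t₁.isMoTop → ¬ t₂.isMoTop →
    Prov.edges t₁ = Prov.edges t₂ → (Prov.edges t₁).Nonempty → time t₁ < time t₂ →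
    t₂.isMergeTop ∧ 3 ≤ (ssAt toPreRun (time t₂) t₂.root).ncard ∧ HasDegThree G t₂.root
  hgrow : ∀ t ∈ built, ∀ e x, ValidProv G S (.grow t e x) →
    ∃ t' ∈ built, Prov.edges t' = insert e (Prov.edges t)
  hmerge : ∀ t₁ ∈ built, ∀ t₂ ∈ built, ValidProv G S (.merge t₁ t₂) →
    ∃ t' ∈ built, Prov.edges t' = Prov.edges t₁ ∪ Prov.edges t₂
  hmergeExempt : ∀ t₁ ∈ built, ∀ t₂ ∈ built, ValidProv G S (.merge t₁ t₂) →
    3 ≤ (ssAt toPreRun (max (time t₁) (time t₂) + 1) t₁.root).ncard →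
    HasDegThree G t₁.root → Prov.merge t₁ t₂ ∈ built
  hmo : ∀ t ∈ built, ∀ r, ValidProv G S (.mo t r) → Prov.mo t r ∈ built

/-- The run (with built set `B`) finds the (unrooted) tree of `t`: some built
provenance has exactly its edge set (and its root, in the degenerate one-node case). -/
def Finds [DecidableEq E] (B : Set (Prov V E)) (t : RTree V E) : Prop :=
  ∃ p ∈ B, Prov.edges p = t.edges ∧ (t.edges = ∅ → p.root = t.root)

/-- The run finds the rooted tree `(T, r)`: some built provenance has exactly
this edge set and this root. -/
def FindsRooted [DecidableEq E] (B : Set (Prov V E)) (T : Finset E) (r : V) : Prop :=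
  ∃ p ∈ B, Prov.edges p = T ∧ p.root = r

end CTP

open CTP

namespace CTP

/-! ### The structural invariant -/

/-- Two nodes are linked by an edge of `T`, traversed in either direction. -/
def Link {V E : Type*} (G : Multigraph V E) (T : Finset E) (a b : V) : Prop :=
  ∃ e ∈ T, G.ends e = s(a, b)

/-- The invariant maintained by `Init`, `Grow` and `Merge`. -/
structure GAMInv {V E : Type*} [DecidableEq E] {m : ℕ} (G : Multigraph V E) (S : Fin m → Set V)
    (p : Prov V E) : Prop where
  root_mem : p.root ∈ p.nodes G
  finite : (p.nodes G).Finite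
  card : (p.nodes G).ncard = p.edges.card + 1
  ends_mem : ∀ e ∈ p.edges, ∀ v ∈ G.ends e, v ∈ p.nodes G
  not_loop : ∀ e ∈ p.edges, ¬ (G.ends e).IsDiag
  /-- A node touched by no edge occurs only in a one-node tree. -/
  mem_or : ∀ v ∈ p.nodes G, (p.edges = ∅ ∧ v = p.root) ∨ v ∈ nodeSet G p.edges
  reach : ∀ v ∈ p.nodes G, Relation.ReflTransGen (Link G p.edges) p.root v
  seed : ∃ v ∈ p.nodes G, isSeed S v
  unique : ∀ i, ∀ v ∈ p.nodes G, ∀ w ∈ p.nodes G, v ∈ S i → w ∈ S i → v = w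
  /-- Each edge `e` separates from the root a node set `A` that contains a seed: no edge other
  than `e` crosses the boundary of `A`. -/
  cut : ∀ e ∈ p.edges, ∃ A ⊆ p.nodes G, p.root ∉ A ∧ (∃ s ∈ A, isSeed S s) ∧
    ∀ f ∈ p.edges, f ≠ e → ∀ v ∈ G.ends f, ∀ w ∈ G.ends f, v ∈ A → w ∈ A

section

variable {V E : Type*} {G : Multigraph V E}

lemma Link.mono {T T' : Finset E} (h : T ⊆ T') {a b : V} (hl : Link G T a b) : Link G T' a b :=
  let ⟨e, he, h'⟩ := hl
  ⟨e, h he, h'⟩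

lemma Link.symm {T : Finset E} {a b : V} (hl : Link G T a b) : Link G T b a :=
  let ⟨e, he, h'⟩ := hl
  ⟨e, he, h'.trans Sym2.eq_swap⟩

lemma reach_mono {T T' : Finset E} (h : T ⊆ T') {a b : V}
    (hl : Relation.ReflTransGen (Link G T) a b) : Relation.ReflTransGen (Link G T') a b := by
  induction hl with
  | refl => exact .refl
  | tail _ hbc ih => exact ih.tail (hbc.mono h)

lemma reach_symm {T : Finset E} {a b : V} (hl : Relation.ReflTransGen (Link G T) a b) :
    Relation.ReflTransGen (Link G T) b a := by
  induction hl with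
  | refl => exact .refl
  | tail _ hbc ih => exact .head hbc.symm ih

lemma nodeSet_mono {T T' : Finset E} (h : T ⊆ T') : nodeSet G T ⊆ nodeSet G T' :=
  fun _ ⟨e, he, hv⟩ => ⟨e, h he, hv⟩

variable [DecidableEq E] {m : ℕ} {S : Fin m → Set V}

/-! ### Init, Grow and Merge preserve the invariant -/

lemma gamInv_init {x : V} {i : Fin m} (h : x ∈ S i) : GAMInv G S (.init x) where
  root_mem := by simp [Prov.root, Prov.nodes]
  finite := by simp [Prov.nodes]
  card := by simp [Prov.nodes, Prov.edges]
  ends_mem := by simp [Prov.edges]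
  not_loop := by simp [Prov.edges]
  mem_or := by simp [Prov.edges, Prov.nodes, Prov.root]
  reach := by
    intro v hv
    obtain rfl : v = x := hv
    exact .refl
  seed := ⟨x, rfl, i, h⟩
  unique := by
    intro i v hv w hw _ _
    exact Eq.trans hv (Eq.symm hw)
  cut := by simp [Prov.edges]

lemma gamInv_grow {t : Prov V E} {e : E} {x : V} (I : GAMInv G S t)
    (he : G.ends e = s(t.root, x)) (hx : x ∉ t.nodes G)
    (hs : ¬ ∃ i ∈ satP G S t, x ∈ S i) : GAMInv G S (.grow t e x) := by
  have hnew : e ∉ t.edges := fun h => hx (I.ends_mem e h x (by simp [he]))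
  have hsub : t.edges ⊆ insert e t.edges := Finset.subset_insert _ _
  have hne : t.root ≠ x := fun h => hx (h ▸ I.root_mem)
  refine ⟨Or.inl rfl, I.finite.insert x, ?_, ?_, ?_, ?_, ?_, ?_, ?_, ?_⟩
  · simp only [Prov.nodes, Prov.edges]
    rw [Set.ncard_insert_of_notMem hx I.finite, Finset.card_insert_of_notMem hnew, I.card]
  · intro f hf v hv
    rcases Finset.mem_insert.1 hf with rfl | hf
    · rw [he, Sym2.mem_iff] at hv
      rcases hv with rfl | rfl
      · exact Or.inr I.root_mem
      · exact Or.inl rfl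
    · exact Or.inr (I.ends_mem f hf v hv)
  · intro f hf
    rcases Finset.mem_insert.1 hf with rfl | hf
    · rw [he]; simpa using hne
    · exact I.not_loop f hf
  · intro v hv
    right
    rcases hv with rfl | hv
    · exact ⟨e, Finset.mem_insert_self _ _, by simp [he]⟩
    · rcases I.mem_or v hv with ⟨-, rfl⟩ | h
      · exact ⟨e, Finset.mem_insert_self _ _, by simp [he]⟩
      · exact nodeSet_mono hsub h
  · intro v hv
    have hstep : Link G (insert e t.edges) x t.root :=
      ⟨e, Finset.mem_insert_self _ _, he.trans Sym2.eq_swap⟩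
    rcases hv with rfl | hv
    · exact .refl
    · exact .head hstep (reach_mono hsub (I.reach v hv))
  · obtain ⟨v, hv, h⟩ := I.seed
    exact ⟨v, Or.inr hv, h⟩
  · intro i v hv w hw hvi hwi
    rcases hv with rfl | hv <;> rcases hw with rfl | hw
    · rfl
    · exact absurd ⟨i, ⟨w, hw, hwi⟩, hvi⟩ hs
    · exact absurd ⟨i, ⟨v, hv, hvi⟩, hwi⟩ hs
    · exact I.unique i v hv w hw hvi hwi
  · intro f hf
    rcases Finset.mem_insert.1 hf with rfl | hf
    · refine ⟨t.nodes G, Set.subset_insert _ _, hx, I.seed, ?_⟩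
      intro g hg hgf v _ w hw _
      rcases Finset.mem_insert.1 hg with rfl | hg
      · exact absurd rfl hgf
      · exact I.ends_mem g hg w hw
    · obtain ⟨A, hA, hrA, hsA, hcut⟩ := I.cut f hf
      refine ⟨A, hA.trans (Set.subset_insert _ _), fun h => hx (hA h), hsA, ?_⟩
      intro g hg hgf v hv w hw hvA
      rcases Finset.mem_insert.1 hg with rfl | hg
      · -- The new edge lies outside the cut: neither the old nor the new root belongs to `A`.
        rw [he, Sym2.mem_iff] at hv
        rcases hv with rfl | rfl
        · exact absurd hvA hrA
        · exact absurd (hA hvA) hx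
      · exact hcut g hg hgf v hv w hw hvA

/-- A common edge would have both ends at the common root, and trees contain no loops. -/
lemma edges_disjoint {t₁ t₂ : Prov V E} (I₁ : GAMInv G S t₁) (I₂ : GAMInv G S t₂)
    (hn : t₁.nodes G ∩ t₂.nodes G ⊆ {t₁.root}) : Disjoint t₁.edges t₂.edges := by
  rw [Finset.disjoint_left]
  intro e h₁ h₂
  refine I₁.not_loop e h₁ ?_
  have key : ∀ v ∈ G.ends e, v = t₁.root :=
    fun v hv => hn ⟨I₁.ends_mem e h₁ v hv, I₂.ends_mem e h₂ v hv⟩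
  revert key
  induction G.ends e using Sym2.ind with
  | _ a b =>
    intro key
    simp [key a (by simp), key b (by simp)]

/-- One half of the cut condition for `Merge`; the other half is its mirror image. -/
lemma merge_cut {t₁ t₂ : Prov V E} (I₁ : GAMInv G S t₁) (I₂ : GAMInv G S t₂)
    (hn : t₁.nodes G ∩ t₂.nodes G ⊆ {t₁.root}) {e : E} (he : e ∈ t₁.edges) :
    ∃ A ⊆ t₁.nodes G, t₁.root ∉ A ∧ (∃ s ∈ A, isSeed S s) ∧
      ∀ f ∈ t₁.edges ∪ t₂.edges, f ≠ e → ∀ v ∈ G.ends f, ∀ w ∈ G.ends f, v ∈ A → w ∈ A := by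
  obtain ⟨A, hA, hrA, hsA, hcut⟩ := I₁.cut e he
  refine ⟨A, hA, hrA, hsA, ?_⟩
  intro f hf hfe v hv w hw hvA
  rcases Finset.mem_union.1 hf with hf | hf
  · exact hcut f hf hfe v hv w hw hvA
  · obtain rfl : v = t₁.root := hn ⟨hA hvA, I₂.ends_mem f hf v hv⟩
    exact absurd hvA hrA

lemma gamInv_merge {t₁ t₂ : Prov V E} (I₁ : GAMInv G S t₁) (I₂ : GAMInv G S t₂)
    (hr : t₁.root = t₂.root) (hn : t₁.nodes G ∩ t₂.nodes G ⊆ {t₁.root})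
    (hs : satP G S t₁ ∩ satP G S t₂ = ∅) : GAMInv G S (.merge t₁ t₂) := by
  have hdis := edges_disjoint I₁ I₂ hn
  have hs' : ∀ i, ∀ v ∈ t₁.nodes G, ∀ w ∈ t₂.nodes G, v ∈ S i → w ∈ S i → False := by
    intro i v hv w hw hvi hwi
    have : i ∈ satP G S t₁ ∩ satP G S t₂ := ⟨⟨v, hv, hvi⟩, ⟨w, hw, hwi⟩⟩
    rw [hs] at this
    exact this
  have hL : t₁.edges ⊆ t₁.edges ∪ t₂.edges := Finset.subset_union_left
  have hR : t₂.edges ⊆ t₁.edges ∪ t₂.edges := Finset.subset_union_right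
  refine ⟨Or.inl I₁.root_mem, I₁.finite.union I₂.finite, ?_, ?_, ?_, ?_, ?_, ?_, ?_, ?_⟩
  · have hint : t₁.nodes G ∩ t₂.nodes G = {t₁.root} :=
      hn.antisymm (Set.singleton_subset_iff.2 ⟨I₁.root_mem, hr ▸ I₂.root_mem⟩)
    have h := Set.ncard_union_add_ncard_inter (t₁.nodes G) (t₂.nodes G) I₁.finite I₂.finite
    rw [hint, Set.ncard_singleton, I₁.card, I₂.card] at h
    simp only [Prov.nodes, Prov.edges]
    rw [Finset.card_union_of_disjoint hdis]
    omega
  · intro f hf v hv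
    rcases Finset.mem_union.1 hf with hf | hf
    · exact Or.inl (I₁.ends_mem f hf v hv)
    · exact Or.inr (I₂.ends_mem f hf v hv)
  · intro f hf
    rcases Finset.mem_union.1 hf with hf | hf
    · exact I₁.not_loop f hf
    · exact I₂.not_loop f hf
  · intro v hv
    have hroot : t₁.root ∈ nodeSet G (t₁.edges ∪ t₂.edges) ∨ t₁.edges ∪ t₂.edges = ∅ := by
      rcases I₁.mem_or _ I₁.root_mem with ⟨h₁, -⟩ | h
      · rcases I₂.mem_or _ I₂.root_mem with ⟨h₂, -⟩ | h
        · right; simp [h₁, h₂]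
        · left; rw [hr]; exact nodeSet_mono hR h
      · exact Or.inl (nodeSet_mono hL h)
    have hcase : v = t₁.root ∨ v ∈ nodeSet G (t₁.edges ∪ t₂.edges) := by
      rcases hv with hv | hv
      · exact (I₁.mem_or v hv).imp (fun h => h.2) (fun h => nodeSet_mono hL h)
      · exact (I₂.mem_or v hv).imp (fun h => h.2.trans hr.symm) (fun h => nodeSet_mono hR h)
    rcases hcase with rfl | h
    · exact hroot.symm.imp (fun h => ⟨h, rfl⟩) id
    · exact Or.inr h
  · intro v hv
    rcases hv with hv | hv
    · exact reach_mono hL (I₁.reach v hv)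
    · have h := reach_mono hR (I₂.reach v hv)
      rw [← hr] at h
      exact h
  · obtain ⟨v, hv, h⟩ := I₁.seed
    exact ⟨v, Or.inl hv, h⟩
  · intro i v hv w hw hvi hwi
    rcases hv with hv | hv <;> rcases hw with hw | hw
    · exact I₁.unique i v hv w hw hvi hwi
    · exact (hs' i v hv w hw hvi hwi).elim
    · exact (hs' i w hw v hv hwi hvi).elim
    · exact I₂.unique i v hv w hw hvi hwi
  · intro e he
    rcases Finset.mem_union.1 he with he | he
    · obtain ⟨A, hA, h⟩ := merge_cut I₁ I₂ hn he
      exact ⟨A, hA.trans Set.subset_union_left, h⟩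
    · rw [Set.inter_comm, hr] at hn
      obtain ⟨A, hA, hrA, hsA, hcut⟩ := merge_cut I₂ I₁ hn he
      refine ⟨A, hA.trans Set.subset_union_right, ?_, hsA, ?_⟩
      · change t₁.root ∉ A
        rwa [hr]
      · intro f hf
        exact hcut f (Finset.union_comm t₁.edges t₂.edges ▸ hf)

lemma gamInv_of_valid {p : Prov V E} (hv : ValidProv G S p) (hmo : ¬ p.hasMo) :
    GAMInv G S p := by
  induction hv with
  | init h => exact gamInv_init h
  | grow _ he hx hs _ hmo' ih => exact gamInv_grow (ih hmo') he hx hs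
  | merge _ _ hr hn hs ih₁ ih₂ =>
    exact gamInv_merge (ih₁ fun h => hmo (Or.inl h)) (ih₂ fun h => hmo (Or.inr h)) hr hn hs
  | mo => exact absurd trivial hmo

/-! ### The root of a result -/

/-- A non-seed root is touched by some edge: otherwise the tree would consist of the root alone,
and every tree contains a seed. -/
lemma root_mem_nodeSet {t : Prov V E} (I : GAMInv G S t) (h : ¬ isSeed S t.root) :
    t.root ∈ nodeSet G t.edges := by
  rcases I.mem_or _ I.root_mem with ⟨he, -⟩ | h'
  · obtain ⟨v, hv, hseed⟩ := I.seed
    rcases I.mem_or v hv with ⟨-, rfl⟩ | ⟨f, hf, -⟩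
    · exact absurd hseed h
    · simp [he] at hf
  · exact h'

/-- The root of a result is a seed, or has degree at least two. -/
lemma root_seed_or_survives {p : Prov V E} (hv : ValidProv G S p) (hmo : ¬ p.hasMo)
    (hfull : ∀ i : Fin m, ∃ v ∈ p.nodes G, v ∈ S i) :
    isSeed S p.root ∨ ∀ e, p.root ∈ nodeSet G (p.edges.erase e) := by
  cases hv with
  | init h => exact Or.inl ⟨_, h⟩
  | @grow t e x ht he hx hs hnotfull hmo' =>
    left
    push Not at hnotfull
    obtain ⟨i, hi⟩ := hnotfull
    obtain ⟨v, hv, hvi⟩ := hfull i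
    rcases hv with rfl | hv
    · exact ⟨i, hvi⟩
    · exact absurd ⟨v, hv, hvi⟩ hi
  | @merge t₁ t₂ h₁ h₂ hr hn hs =>
    right
    have I₁ := gamInv_of_valid h₁ fun h => hmo (Or.inl h)
    have I₂ := gamInv_of_valid h₂ fun h => hmo (Or.inr h)
    have hroot : ¬ isSeed S t₁.root := by
      rintro ⟨i, hi⟩
      have : i ∈ satP G S t₁ ∩ satP G S t₂ :=
        ⟨⟨_, I₁.root_mem, hi⟩, ⟨_, I₂.root_mem, hr ▸ hi⟩⟩
      rw [hs] at this
      exact this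
    have hdis := edges_disjoint I₁ I₂ hn
    intro e
    change t₁.root ∈ nodeSet G ((t₁.edges ∪ t₂.edges).erase e)
    -- The edge `e` belongs to at most one of the two trees; the root is still touched by the other.
    by_cases he : e ∈ t₁.edges
    · rw [hr]
      refine nodeSet_mono ?_ (root_mem_nodeSet I₂ (hr ▸ hroot))
      intro f hf
      refine Finset.mem_erase.2 ⟨?_, Finset.mem_union_right _ hf⟩
      rintro rfl
      exact Finset.disjoint_left.1 hdis he hf
    · refine nodeSet_mono ?_ (root_mem_nodeSet I₁ hroot)
      intro f hf
      refine Finset.mem_erase.2 ⟨?_, Finset.mem_union_left _ hf⟩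
      rintro rfl
      exact he hf
  | mo => exact absurd trivial hmo

/-! ### Nodes and validity of the rooted tree -/

lemma GAMInv.nodesIn_eq {p : Prov V E} (I : GAMInv G S p) :
    nodesIn G p.edges p.root = p.nodes G := by
  ext v
  constructor
  · rintro (⟨-, rfl⟩ | ⟨e, he, hv⟩)
    · exact I.root_mem
    · exact I.ends_mem e he v hv
  · exact I.mem_or v

lemma GAMInv.nodeSet_eq {p : Prov V E} (I : GAMInv G S p) (h : p.edges.Nonempty) :
    nodeSet G p.edges = p.nodes G := by
  rw [← I.nodesIn_eq]
  ext v
  simp [nodesIn, h.ne_empty]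

lemma GAMInv.valid {p : Prov V E} (I : GAMInv G S p) : RTree.Valid G ⟨p.edges, p.root⟩ := by
  refine ⟨⟨?_, fun h => by rw [I.nodeSet_eq h, I.card]⟩, fun h => ?_⟩
  · rintro x ⟨e, he, hx⟩ y ⟨f, hf, hy⟩
    have hx' := I.reach x (I.ends_mem e he x hx)
    have hy' := I.reach y (I.ends_mem f hf y hy)
    exact (reach_symm hx').trans hy'
  · change p.root ∈ nodeSet G p.edges
    rw [I.nodeSet_eq h]
    exact I.root_mem

end

end CTP

/-- every result tree reported by GAM (a built tree containing a
seed from each seed set) is a minimal CTP result; hence GAM never needs to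
minimize the results it finds. -/
theorem gam_results_minimal {V E : Type*} [DecidableEq E] {m : ℕ}
    (G : Multigraph V E) (S : Fin m → Set V) (R : GAMRun G S)
    (p : Prov V E) (hp : p ∈ R.built)
    (hreported : ∀ i : Fin m, ∃ v ∈ p.nodes G, v ∈ S i) :
    IsCTPResult G S ⟨Prov.edges p, p.root⟩ := by
  have hv := R.hvalid p hp
  have hmo := R.hnomo p hp
  have I := gamInv_of_valid hv hmo
  have hnodes : RTree.nodes G ⟨p.edges, p.root⟩ = p.nodes G := I.nodesIn_eq
  refine ⟨I.valid, ?_, ?_⟩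
  · intro i
    obtain ⟨v, hv, hvi⟩ := hreported i
    rw [hnodes]
    exact ⟨v, ⟨hv, hvi⟩, fun w hw => I.unique i w hw.1 v hv hw.2 hvi⟩
  · intro e he
    rw [hnodes]
    change ¬ connectedEdges G (p.edges.erase e) ∨
      ∃ i, ∃ v ∈ S i, v ∈ p.nodes G ∧ v ∉ nodeSet G (p.edges.erase e)
    rw [or_iff_not_imp_left, not_not]
    intro hconn
    obtain ⟨A, hA, hrA, ⟨s, hsA, i, hsi⟩, hcut⟩ := I.cut e he
    by_cases hs : s ∈ nodeSet G (p.edges.erase e)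
    · -- A path in the remainder cannot leave `A`, so the root is no longer touched.
      have hr : p.root ∉ nodeSet G (p.edges.erase e) := by
        intro hr
        have hpath := hconn s hs p.root hr
        refine hrA ?_
        clear hr
        generalize p.root = y at hpath
        induction hpath with
        | refl => exact hsA
        | @tail b c _ hbc ih =>
          obtain ⟨f, hf, hbc⟩ := hbc
          exact hcut f (Finset.mem_of_mem_erase hf) (Finset.ne_of_mem_erase hf) b
            (by simp [hbc]) c (by simp [hbc]) ih
      rcases root_seed_or_survives hv hmo hreported with ⟨j, hj⟩ | h
      · exact ⟨j, p.root, hj, I.root_mem, hr⟩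
      · exact absurd (h e) hr
    · exact ⟨i, s, hsi, hA hsA, hs⟩
end

section
/- In any rooted tree ever built by the GAM algorithm (i.e., any tree with an Init/Grow/Merge provenance), every leaf, with the possible exception of the root, is a seed node. Moreover, the root of a Merge provenance is never a leaf. -/
namespace CTP

variable {V E : Type*} {m : ℕ} {G : Multigraph V E} {S : Fin m → Set V}

/-! ### Leaves of edge sets -/

lemma IsLeaf.edge_unique {T : Finset E} {v : V} (h : IsLeaf G T v) {e f : E}
    (he : e ∈ T) (hve : v ∈ G.ends e) (hf : f ∈ T) (hvf : v ∈ G.ends f) : e = f := by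
  obtain ⟨g, hg⟩ := Set.ncard_eq_one.mp h
  have h₁ : e ∈ ({g} : Set E) := hg ▸ ⟨he, hve⟩
  have h₂ : f ∈ ({g} : Set E) := hg ▸ ⟨hf, hvf⟩
  exact h₁.trans h₂.symm

lemma IsLeaf.congr {T T' : Finset E} {v : V} (h : IsLeaf G T v)
    (hT : ∀ e, v ∈ G.ends e → (e ∈ T ↔ e ∈ T')) : IsLeaf G T' v := by
  have hset : {e | e ∈ T' ∧ v ∈ G.ends e} = {e | e ∈ T ∧ v ∈ G.ends e} := by
    ext e
    exact ⟨fun ⟨h₁, h₂⟩ => ⟨(hT e h₂).2 h₁, h₂⟩, fun ⟨h₁, h₂⟩ => ⟨(hT e h₂).1 h₁, h₂⟩⟩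
  unfold IsLeaf deg at *
  rw [hset]
  exact h

/-! ### Nodes and edges of valid provenances -/

lemma ValidProv.root_mem {p : Prov V E} (h : ValidProv G S p) : p.root ∈ p.nodes G := by
  induction h with
  | init => exact rfl
  | grow => exact Or.inl rfl
  | merge _ _ _ _ _ ih₁ _ => exact Or.inl ih₁
  | mo _ hr => exact hr

lemma ValidProv.exists_seed {p : Prov V E} (h : ValidProv G S p) :
    ∃ v ∈ p.nodes G, isSeed S v := by
  induction h with
  | init h => exact ⟨_, rfl, _, h⟩
  | grow _ _ _ _ _ _ ih => exact ih.imp fun v hv => ⟨Or.inr hv.1, hv.2⟩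
  | merge _ _ _ _ _ ih₁ _ => exact ih₁.imp fun v hv => ⟨Or.inl hv.1, hv.2⟩
  | mo _ _ _ _ _ ih => exact ih

variable [DecidableEq E]

lemma ValidProv.ends_mem {p : Prov V E} (h : ValidProv G S p) :
    ∀ e ∈ p.edges, ∀ v ∈ G.ends e, v ∈ p.nodes G := by
  induction h with
  | init => simp [Prov.edges]
  | grow ht he _ _ _ _ ih =>
    intro f hf v hv
    rcases Finset.mem_insert.mp hf with rfl | hf
    · rw [he, Sym2.mem_iff] at hv
      rcases hv with rfl | rfl
      · exact Or.inr ht.root_mem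
      · exact Or.inl rfl
    · exact Or.inr (ih f hf v hv)
  | merge _ _ _ _ _ ih₁ ih₂ =>
    intro f hf v hv
    exact (Finset.mem_union.mp hf).imp (fun hf => ih₁ f hf v hv) (fun hf => ih₂ f hf v hv)
  | mo _ _ _ _ _ ih => exact ih

lemma ValidProv.not_isDiag {p : Prov V E} (h : ValidProv G S p) :
    ∀ e ∈ p.edges, ¬ (G.ends e).IsDiag := by
  induction h with
  | init => simp [Prov.edges]
  | grow ht he hx _ _ _ ih =>
    intro f hf
    rcases Finset.mem_insert.mp hf with rfl | hf
    · rw [he, Sym2.mk_isDiag_iff]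
      intro h
      exact hx (h ▸ ht.root_mem)
    · exact ih f hf
  | merge _ _ _ _ _ ih₁ ih₂ =>
    intro f hf
    exact (Finset.mem_union.mp hf).elim (ih₁ f) (ih₂ f)
  | mo _ _ _ _ _ ih => exact ih

/-- The recursively defined nodes of a provenance are nodes of its rooted edge set. -/
lemma ValidProv.nodes_subset {p : Prov V E} (h : ValidProv G S p) :
    ∀ v ∈ p.nodes G, (p.edges = ∅ ∧ v = p.root) ∨ ∃ e ∈ p.edges, v ∈ G.ends e := by
  induction h with
  | init => exact fun v hv => Or.inl ⟨rfl, hv⟩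
  | @grow t e x ht he _ _ _ _ ih =>
    have hmem : e ∈ (Prov.grow t e x).edges := Finset.mem_insert_self _ _
    rintro v (rfl | hv)
    · exact Or.inr ⟨e, hmem, by simp [he]⟩
    · rcases ih v hv with ⟨-, rfl⟩ | ⟨f, hf, hvf⟩
      · exact Or.inr ⟨e, hmem, by simp [he]⟩
      · exact Or.inr ⟨f, Finset.mem_insert_of_mem hf, hvf⟩
  | @merge t₁ t₂ h₁ h₂ hr _ _ ih₁ ih₂ =>
    -- an edgeless side consists of the common root, to which the other side applies
    rintro v (hv | hv)
    · rcases ih₁ v hv with ⟨hE, rfl⟩ | ⟨f, hf, hvf⟩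
      · rcases ih₂ _ h₂.root_mem with ⟨hE₂, -⟩ | ⟨f, hf, hvf⟩
        · exact Or.inl ⟨by simp [Prov.edges, hE, hE₂], rfl⟩
        · exact Or.inr ⟨f, Finset.mem_union_right _ hf, hr ▸ hvf⟩
      · exact Or.inr ⟨f, Finset.mem_union_left _ hf, hvf⟩
    · rcases ih₂ v hv with ⟨hE, rfl⟩ | ⟨f, hf, hvf⟩
      · rcases ih₁ _ h₁.root_mem with ⟨hE₁, -⟩ | ⟨f, hf, hvf⟩
        · exact Or.inl ⟨by simp [Prov.edges, hE, hE₁], hr.symm⟩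
        · exact Or.inr ⟨f, Finset.mem_union_left _ hf, hr ▸ hvf⟩
      · exact Or.inr ⟨f, Finset.mem_union_right _ hf, hvf⟩
  | mo _ hr _ hne _ ih =>
    intro v hv
    rcases ih v hv with ⟨hE, -⟩ | h
    · rcases ih _ hr with ⟨-, h⟩ | ⟨f, hf, -⟩
      · exact absurd h hne
      · simp [hE] at hf
    · exact Or.inr h

/-- An edgeless provenance is a single node, which must be its seed. -/
lemma ValidProv.root_seed_or_edge {p : Prov V E} (h : ValidProv G S p) :
    isSeed S p.root ∨ ∃ e ∈ p.edges, p.root ∈ G.ends e := by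
  rcases h.nodes_subset _ h.root_mem with ⟨hE, -⟩ | h'
  · obtain ⟨v, hv, hs⟩ := h.exists_seed
    rcases h.nodes_subset v hv with ⟨-, rfl⟩ | ⟨e, he, -⟩
    · exact Or.inl hs
    · simp [hE] at he
  · exact Or.inr h'

/-! ### Leaves and roots -/

lemma ValidProv.leaf_isSeed {p : Prov V E} (h : ValidProv G S p) (hnomo : ¬ p.hasMo) :
    ∀ v ∈ p.nodes G, IsLeaf G p.edges v → v ≠ p.root → isSeed S v := by
  induction h with
  | init => exact fun v hv _ hne => absurd hv hne
  | @grow t e x ht he hx _ _ hmo ih =>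
    rintro v (rfl | hv) hleaf hne
    · exact absurd rfl hne
    by_cases hvr : v = t.root
    · subst hvr
      refine ht.root_seed_or_edge.resolve_right ?_
      rintro ⟨f, hf, hvf⟩
      have hef : e = f := hleaf.edge_unique (Finset.mem_insert_self _ _) (by simp [he])
        (Finset.mem_insert_of_mem hf) hvf
      -- otherwise the new node `x`, an endpoint of `e`, would be an old one
      exact hx (ht.ends_mem f hf x (by simp [← hef, he]))
    · refine ih hmo v hv (hleaf.congr fun f hvf => ?_) hvr
      have hfe : f ≠ e := by
        rintro rfl
        rw [he, Sym2.mem_iff] at hvf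
        exact hvf.elim hvr hne
      simp [Prov.edges, hfe]
  | @merge t₁ t₂ h₁ h₂ hr hn _ ih₁ ih₂ =>
    have hno : ¬ t₁.hasMo ∧ ¬ t₂.hasMo := not_or.mp hnomo
    rintro v (hv | hv) hleaf hne
    · refine ih₁ hno.1 v hv (hleaf.congr fun f hvf => ?_) hne
      have hf : f ∉ t₂.edges := fun hf => hne (hn ⟨hv, h₂.ends_mem f hf v hvf⟩)
      simp [Prov.edges, hf]
    · refine ih₂ hno.2 v hv (hleaf.congr fun f hvf => ?_) fun h => hne (h.trans hr.symm)
      have hf : f ∉ t₁.edges := fun hf => hne (hn ⟨h₁.ends_mem f hf v hvf, hv⟩)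
      simp [Prov.edges, hf]
  | mo => exact absurd trivial hnomo

lemma ValidProv.merge_root_not_isLeaf {t₁ t₂ : Prov V E} (h₁ : ValidProv G S t₁)
    (h₂ : ValidProv G S t₂) (hr : t₁.root = t₂.root)
    (hn : t₁.nodes G ∩ t₂.nodes G ⊆ {t₁.root}) (hs : satP G S t₁ ∩ satP G S t₂ = ∅) :
    ¬ IsLeaf G (t₁.edges ∪ t₂.edges) t₁.root := by
  intro hleaf
  have hns : ¬ isSeed S t₁.root := by
    rintro ⟨i, hi⟩
    have hmem : i ∈ satP G S t₁ ∩ satP G S t₂ :=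
      ⟨⟨_, h₁.root_mem, hi⟩, ⟨_, h₂.root_mem, hr ▸ hi⟩⟩
    simp [hs] at hmem
  obtain ⟨e, he, hre⟩ := h₁.root_seed_or_edge.resolve_left hns
  obtain ⟨f, hf, hrf⟩ := h₂.root_seed_or_edge.resolve_left (hr ▸ hns)
  have hef : e = f := hleaf.edge_unique (Finset.mem_union_left _ he) hre
    (Finset.mem_union_right _ hf) (hr ▸ hrf)
  subst hef
  have hall : ∀ v ∈ G.ends e, v = t₁.root := fun v hv =>
    hn ⟨h₁.ends_mem e he v hv, h₂.ends_mem e hf v hv⟩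
  have hd := h₁.not_isDiag e he
  generalize G.ends e = z at hall hd
  induction z with
  | h a b =>
    exact hd (Sym2.mk_isDiag_iff.mpr ((hall a (by simp)).trans (hall b (by simp)).symm))

end CTP

open CTP

/-- in any rooted tree ever built by GAM (any tree with an
Init/Grow/Merge provenance), every leaf except possibly the root is a seed;
moreover, the root of a Merge provenance is never a leaf. -/
theorem gam_tree_leaves_are_seeds {V E : Type*} [DecidableEq E] {m : ℕ}
    (G : Multigraph V E) (S : Fin m → Set V)
    (p : Prov V E) (hvalid : ValidProv G S p) (hnomo : ¬ p.hasMo) :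
    (∀ v ∈ p.nodes G, IsLeaf G (Prov.edges p) v → v ≠ p.root → isSeed S v) ∧
    (p.isMergeTop → ¬ IsLeaf G (Prov.edges p) p.root) := by
  refine ⟨hvalid.leaf_isSeed hnomo, fun hm => ?_⟩
  cases hvalid with
  | merge h₁ h₂ hr hn hs => exact ValidProv.merge_root_not_isLeaf h₁ h₂ hr hn hs
  | init => exact hm.elim
  | grow => exact hm.elim
  | mo => exact hm.elim
end

section
/- Consider the chain graph with nodes 1,2,…,N+1 in which, for each 1 ≤ i ≤ N, there are exactly two distinct parallel edges between node i and node i+1 (and no other edges). The CTP with the two seed sets {1} and {N+1} has exactly 2^N results, i.e., there are exactly 2^N minimal connecting subtrees (paths) between node 1 and node N+1; since the graph has |E| = 2N edges, this number equals 2^{|E|/2}. -/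
open CTP

/-- The chain graph: nodes `0,…,N` (standing for `1,…,N+1`), with exactly two
distinct parallel edges between each pair of consecutive nodes (and no other
edges), so `|E| = 2N`. -/
def chainG (N : ℕ) : Multigraph (Fin (N + 1)) (Fin N × Bool) :=
  ⟨fun p => s(p.1.castSucc, p.1.succ)⟩

/-- The two seed sets: the first node and the last node of the chain. -/
def chainS (N : ℕ) : Fin 2 → Set (Fin (N + 1)) := ![{0}, {Fin.last N}]

/-! ### Paths choosing one edge from each parallel pair -/

/-- The edge set of the path from `0` to `N` that takes the copy `f i` of the `i`-th edge pair. -/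
def chainPath {N : ℕ} (f : Fin N → Bool) : Finset (Fin N × Bool) :=
  Finset.univ.image fun i => (i, f i)

lemma mem_chainPath {N : ℕ} (f : Fin N → Bool) (e : Fin N × Bool) :
    e ∈ chainPath f ↔ e.2 = f e.1 := by
  rcases e with ⟨i, b⟩
  simp [chainPath, eq_comm]

lemma card_chainPath {N : ℕ} (f : Fin N → Bool) : (chainPath f).card = N := by
  rw [chainPath, Finset.card_image_of_injective _ fun i j h => (Prod.ext_iff.mp h).1]
  simp

lemma chainPath_injective {N : ℕ} :
    Function.Injective (chainPath : (Fin N → Bool) → Finset (Fin N × Bool)) := by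
  intro f g h
  funext i
  have h1 : (i, f i) ∈ chainPath g := h ▸ (mem_chainPath f (i, f i)).2 rfl
  exact (mem_chainPath g _).1 h1

/-- The `i`-th edge pair is a cut: a walk in `T` from its left to its right uses one of its edges. -/
lemma crossing {N : ℕ} {T : Finset (Fin N × Bool)} {x y : Fin (N + 1)} (i : Fin N)
    (h : Relation.ReflTransGen (fun a b => ∃ e ∈ T, (chainG N).ends e = s(a, b)) x y)
    (hx : x.val ≤ i.val) (hy : i.val < y.val) : ∃ b, (i, b) ∈ T := by
  by_contra hno
  have key : y.val ≤ i.val := by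
    clear hy
    induction h with
    | refl => exact hx
    | @tail a b _ hab ih =>
      obtain ⟨⟨j, c⟩, he, hends⟩ := hab
      have hji : j.val ≠ i.val := fun hji => hno ⟨c, Fin.ext hji ▸ he⟩
      simp only [chainG, Sym2.eq_iff] at hends
      rcases hends with ⟨rfl, rfl⟩ | ⟨rfl, rfl⟩
      · simp only [Fin.val_castSucc, Fin.val_succ] at ih ⊢
        omega
      · simp only [Fin.val_castSucc, Fin.val_succ] at ih ⊢
        omega
  omega

lemma connectedEdges_chainPath {N : ℕ} (f : Fin N → Bool) :
    connectedEdges (chainG N) (chainPath f) := by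
  have hsymm : Std.Symm fun a b => ∃ e ∈ chainPath f, (chainG N).ends e = s(a, b) :=
    ⟨fun a b ⟨e, he, h⟩ => ⟨e, he, h.trans Sym2.eq_swap⟩⟩
  have h0 : ∀ x : Fin (N + 1), Relation.ReflTransGen
      (fun a b => ∃ e ∈ chainPath f, (chainG N).ends e = s(a, b)) 0 x := by
    intro x
    induction x using Fin.induction with
    | zero => exact .refl
    | succ i ih => exact ih.tail ⟨(i, f i), (mem_chainPath _ _).2 rfl, rfl⟩
  intro x _ y _
  exact (Relation.ReflTransGen.stdSymm.symm _ _ (h0 x)).trans (h0 y)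

lemma nodeSet_chainPath {N : ℕ} (hN : 0 < N) (f : Fin N → Bool) :
    nodeSet (chainG N) (chainPath f) = Set.univ := by
  refine Set.eq_univ_of_forall fun x => ?_
  induction x using Fin.cases with
  | zero =>
    refine ⟨(⟨0, hN⟩, f ⟨0, hN⟩), (mem_chainPath _ _).2 rfl, ?_⟩
    exact Sym2.mem_iff.2 (Or.inl rfl)
  | succ i => exact ⟨(i, f i), (mem_chainPath _ _).2 rfl, Sym2.mem_iff.2 (Or.inr rfl)⟩

/-- For `N = 0` the edge set is empty, and the root `0` alone makes up the node set. -/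
lemma nodesIn_chainPath {N : ℕ} (f : Fin N → Bool) (v : Fin (N + 1)) :
    v ∈ nodesIn (chainG N) (chainPath f) 0 := by
  rcases Nat.eq_zero_or_pos N with rfl | hN
  · exact Or.inl ⟨Finset.eq_empty_of_isEmpty _, Subsingleton.elim (α := Fin 1) _ _⟩
  · exact Or.inr (nodeSet_chainPath hN f ▸ Set.mem_univ v)

/-! ### Results are exactly these paths -/

lemma isCTPResult_chainPath {N : ℕ} (f : Fin N → Bool) :
    IsCTPResult (chainG N) (chainS N) ⟨chainPath f, 0⟩ := by
  have hpos : (chainPath f).Nonempty → 0 < N := fun ⟨e, _⟩ => Fin.pos e.1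
  refine ⟨⟨⟨connectedEdges_chainPath f, fun h => ?_⟩, fun h => ?_⟩, fun i => ?_, fun e he => ?_⟩
  · rw [nodeSet_chainPath (hpos h), card_chainPath, Set.ncard_univ, Nat.card_fin]
  · exact nodeSet_chainPath (hpos h) f ▸ Set.mem_univ _
  · fin_cases i
    · exact ⟨0, ⟨nodesIn_chainPath f 0, rfl⟩, fun y hy => hy.2⟩
    · exact ⟨Fin.last N, ⟨nodesIn_chainPath f _, rfl⟩, fun y hy => hy.2⟩
  · by_cases h0 : (0 : Fin (N + 1)) ∈ nodeSet (chainG N) ((chainPath f).erase e)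
    · by_cases hl : Fin.last N ∈ nodeSet (chainG N) ((chainPath f).erase e)
      · refine Or.inl fun hc => ?_
        obtain ⟨b, hb⟩ := crossing e.1 (hc _ h0 _ hl) (Nat.zero_le _) e.1.isLt
        rw [Finset.mem_erase, mem_chainPath] at hb
        exact hb.1 (Prod.ext rfl (hb.2.trans ((mem_chainPath f e).1 he).symm))
      · exact Or.inr ⟨1, Fin.last N, rfl, nodesIn_chainPath f _, hl⟩
    · exact Or.inr ⟨0, 0, rfl, nodesIn_chainPath f _, h0⟩

lemma exists_chainPath_of_isCTPResult {N : ℕ} {T : Finset (Fin N × Bool)}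
    (h : IsCTPResult (chainG N) (chainS N) ⟨T, 0⟩) : ∃ f, chainPath f = T := by
  obtain ⟨⟨⟨hconn, htree⟩, hroot⟩, hseed, -⟩ := h
  rcases Finset.eq_empty_or_nonempty T with rfl | hT
  · obtain ⟨v, ⟨hv, hvl⟩, -⟩ := hseed 1
    have hvl' : v = Fin.last N := hvl
    -- With no edges the only node is `0`, which must also be the last node, so `N = 0`.
    have hv0 : v = 0 := by
      rcases hv with ⟨_, h⟩ | ⟨e, he, _⟩
      · exact h
      · exact absurd he (Finset.notMem_empty e)
    have hN : N = 0 := by simpa using congrArg Fin.val (hvl'.symm.trans hv0)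
    subst hN
    exact ⟨fun _ => true, Finset.eq_empty_of_isEmpty _⟩
  · have hl : Fin.last N ∈ nodeSet (chainG N) T := by
      obtain ⟨v, ⟨hv, hvl⟩, -⟩ := hseed 1
      have hvl' : v = Fin.last N := hvl
      rcases hv with ⟨h, _⟩ | h
      · exact absurd h hT.ne_empty
      · exact hvl' ▸ h
    have hwalk := hconn _ (hroot hT) _ hl
    choose f hf using fun i : Fin N => crossing i hwalk (Nat.zero_le _) i.isLt
    refine ⟨f, Finset.eq_of_subset_of_card_le (fun e he => ?_) ?_⟩
    · rw [mem_chainPath] at he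
      have h1 := hf e.1
      rwa [← he] at h1
    · have h1 := htree hT
      have h2 := Set.ncard_le_card (nodeSet (chainG N) T)
      rw [Nat.card_fin] at h2
      rw [card_chainPath]
      change (nodeSet (chainG N) T).ncard = T.card + 1 at h1
      omega

/-- the CTP with seed sets `{1}` and `{N+1}` on the chain graph
has exactly `2^N` results (minimal connecting subtrees between the two end
nodes); since the graph has `|E| = 2N` edges, this number equals `2^(|E|/2)`. -/
theorem chain_has_two_pow_results (N : ℕ) :
    Set.ncard {T : Finset (Fin N × Bool) |
      IsCTPResult (chainG N) (chainS N) ⟨T, (0 : Fin (N + 1))⟩} = 2 ^ N ∧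
    2 ^ N = 2 ^ (Fintype.card (Fin N × Bool) / 2) := by
  refine ⟨?_, by simp⟩
  have hrange : {T : Finset (Fin N × Bool) |
      IsCTPResult (chainG N) (chainS N) ⟨T, (0 : Fin (N + 1))⟩} =
        Set.range (chainPath : (Fin N → Bool) → _) := by
    ext T
    exact ⟨exists_chainPath_of_isCTPResult, fun ⟨f, hf⟩ => hf ▸ isCTPResult_chainPath f⟩
  rw [hrange, ← Set.image_univ, Set.ncard_image_of_injective _ chainPath_injective,
    Set.ncard_univ]
  simp
end

section
/- The ESP algorithm is incomplete for 3 seed sets: on the undirected path graph with nodes A,1,2,B,3,C and edges A–1, 1–2, 2–B, B–3, 3–C, with seed sets S_1={A}, S_2={B}, S_3={C}, there exists an execution order of ESP under which no CTP result is reported, even though the CTP has a result (the tree consisting of all five edges). -/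
open CTP

/-- The undirected path graph `A–1–2–B–3–C`: nodes `A=0, 1=1, 2=2, B=3, 3=4,
C=5`, edges between consecutive nodes. -/
def g17 : Multigraph (Fin 6) (Fin 5) := ⟨fun i => s(i.castSucc, i.succ)⟩

/-- Seed sets `S₁={A}, S₂={B}, S₃={C}`. -/
def s17 : Fin 3 → Set (Fin 6) := ![{0}, {3}, {5}]

/-! ### Decidable nodes and seeds -/

/-- The node set of a provenance as a finset, so that membership is decidable. -/
def nodeFinset : Prov (Fin 6) (Fin 5) → Finset (Fin 6)
  | .init x => {x}
  | .grow t _ x => insert x (nodeFinset t)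
  | .merge t₁ t₂ => nodeFinset t₁ ∪ nodeFinset t₂
  | .mo t _ => nodeFinset t

theorem mem_nodes_iff (p : Prov (Fin 6) (Fin 5)) (v : Fin 6) :
    v ∈ p.nodes g17 ↔ v ∈ nodeFinset p := by
  induction p with
  | init x => simp [Prov.nodes, nodeFinset]
  | grow t e x ih => simp [Prov.nodes, nodeFinset, ih]
  | merge t₁ t₂ ih₁ ih₂ => simp [Prov.nodes, nodeFinset, ih₁, ih₂]
  | mo t r ih => simpa [Prov.nodes, nodeFinset] using ih

/-- The only seed in each seed set. -/
def seed17 : Fin 3 → Fin 6 := ![0, 3, 5]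

theorem mem_s17_iff (i : Fin 3) (v : Fin 6) : v ∈ s17 i ↔ v = seed17 i := by
  fin_cases i <;> simp [s17, seed17]

theorem mem_satP_iff (p : Prov (Fin 6) (Fin 5)) (i : Fin 3) :
    i ∈ satP g17 s17 p ↔ seed17 i ∈ nodeFinset p := by
  simp [satP, mem_s17_iff, mem_nodes_iff]

/-! ### The kept provenances and their closure properties -/

/-- The eleven provenances kept by the run; in each of them, all edges lie on the same side
of the seed `B = 3`. -/
def espTree : Fin 11 → Prov (Fin 6) (Fin 5) :=
  ![.init 0, .init 3, .init 5,
    .grow (.init 0) 0 1,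
    .grow (.init 3) 2 2,
    .grow (.init 3) 3 4,
    .grow (.init 5) 4 4,
    .grow (.grow (.init 0) 0 1) 1 2,
    .grow (.grow (.init 3) 2 2) 1 1,
    .grow (.grow (.grow (.init 3) 2 2) 1 1) 0 0,
    .grow (.grow (.init 3) 3 4) 4 5]

/-- A build time. It exceeds that of every child, and its weights are chosen to make it injective
on the provenances of `espTree`. -/
def buildTime : Prov (Fin 6) (Fin 5) → ℕ
  | .init x => x
  | .grow t e _ => buildTime t + 10 * (e + 1)
  | .merge t₁ t₂ => buildTime t₁ + buildTime t₂ + 1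
  | .mo t _ => buildTime t + 1

theorem buildTime_injective : ∀ i j, buildTime (espTree i) = buildTime (espTree j) → i = j := by
  decide

theorem espTree_dedup : ∀ i j, Prov.edges (espTree i) = Prov.edges (espTree j) →
    (Prov.edges (espTree i)).Nonempty → i = j := by
  decide

/-- Every possible Grow step from a kept tree produces the edge set of a kept tree. -/
theorem espTree_grow_closed : ∀ i e x, g17.ends e = s((espTree i).root, x) →
    x ∉ nodeFinset (espTree i) →
    ∃ j, Prov.edges (espTree j) = insert e (Prov.edges (espTree i)) := by
  decide

/-- Every possible Merge step of two kept trees produces the edge set of a kept tree. -/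
theorem espTree_merge_closed : ∀ i j, (espTree i).root = (espTree j).root →
    nodeFinset (espTree i) ∩ nodeFinset (espTree j) ⊆ {(espTree i).root} →
    (∀ k, ¬ (seed17 k ∈ nodeFinset (espTree i) ∧ seed17 k ∈ nodeFinset (espTree j))) →
    ∃ k, Prov.edges (espTree k) = Prov.edges (espTree i) ∪ Prov.edges (espTree j) := by
  decide

theorem espTree_not_full : ∀ i, ¬ ∀ k, seed17 k ∈ nodeFinset (espTree i) := by
  decide

/-! ### Validity of the kept provenances -/

theorem validProv_init (k : Fin 3) : ValidProv g17 s17 (.init (seed17 k)) :=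
  .init ((mem_s17_iff k _).2 rfl)

/-- The side conditions of a Grow step, in decidable form. -/
theorem validProv_grow {t : Prov (Fin 6) (Fin 5)} {e : Fin 5} {x : Fin 6}
    (ht : ValidProv g17 s17 t) (hmo : ¬ t.hasMo)
    (h : g17.ends e = s(t.root, x) ∧ x ∉ nodeFinset t ∧
      (∀ k, seed17 k ∈ nodeFinset t → x ≠ seed17 k) ∧ ¬ ∀ k, seed17 k ∈ nodeFinset t) :
    ValidProv g17 s17 (.grow t e x) := by
  obtain ⟨he, hx, hs, hf⟩ := h
  refine .grow ht he (by rwa [mem_nodes_iff]) ?_ (by simpa only [mem_satP_iff] using hf) hmo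
  rintro ⟨k, hk, hxk⟩
  exact hs k ((mem_satP_iff _ _).1 hk) ((mem_s17_iff _ _).1 hxk)

theorem espTree_noMo (i : Fin 11) : ¬ (espTree i).hasMo := by
  fin_cases i <;> exact id

theorem espTree_valid (i : Fin 11) : ValidProv g17 s17 (espTree i) := by
  have h0 : ValidProv g17 s17 (espTree 0) := validProv_init 0
  have h1 : ValidProv g17 s17 (espTree 1) := validProv_init 1
  have h2 : ValidProv g17 s17 (espTree 2) := validProv_init 2
  have h3 : ValidProv g17 s17 (espTree 3) := validProv_grow h0 id (by decide)
  have h4 : ValidProv g17 s17 (espTree 4) := validProv_grow h1 id (by decide)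
  have h5 : ValidProv g17 s17 (espTree 5) := validProv_grow h1 id (by decide)
  have h6 : ValidProv g17 s17 (espTree 6) := validProv_grow h2 id (by decide)
  have h7 : ValidProv g17 s17 (espTree 7) := validProv_grow h3 id (by decide)
  have h8 : ValidProv g17 s17 (espTree 8) := validProv_grow h4 id (by decide)
  have h9 : ValidProv g17 s17 (espTree 9) := validProv_grow h8 id (by decide)
  have h10 : ValidProv g17 s17 (espTree 10) := validProv_grow h5 id (by decide)
  fin_cases i <;> assumption

theorem espTree_children (i : Fin 11) :
    ∀ c ∈ (espTree i).children, c ∈ Set.range espTree ∧ buildTime c < buildTime (espTree i) := by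
  have key : ∀ i j : Fin 11, (espTree i).children = [espTree j] →
      buildTime (espTree j) < buildTime (espTree i) →
      ∀ c ∈ (espTree i).children,
        c ∈ Set.range espTree ∧ buildTime c < buildTime (espTree i) := by
    intro i j h hlt c hc
    rw [h, List.mem_singleton] at hc
    exact hc ▸ ⟨⟨j, rfl⟩, hlt⟩
  fin_cases i
  · exact fun c hc => absurd hc List.not_mem_nil
  · exact fun c hc => absurd hc List.not_mem_nil
  · exact fun c hc => absurd hc List.not_mem_nil
  · exact key 3 0 rfl (by decide)
  · exact key 4 1 rfl (by decide)
  · exact key 5 1 rfl (by decide)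
  · exact key 6 2 rfl (by decide)
  · exact key 7 3 rfl (by decide)
  · exact key 8 4 rfl (by decide)
  · exact key 9 8 rfl (by decide)
  · exact key 10 5 rfl (by decide)

/-! ### The execution -/

/-- The ESP execution keeping exactly the provenances of `espTree`. -/
def espRun : ESPRun g17 s17 where
  built := Set.range espTree
  time := buildTime
  hvalid := by
    rintro _ ⟨i, rfl⟩
    exact espTree_valid i
  hchild := by
    rintro _ ⟨i, rfl⟩
    exact espTree_children i
  htime := by
    rintro _ ⟨i, rfl⟩ _ ⟨j, rfl⟩ h
    rw [buildTime_injective i j h]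
  hinit := by
    rintro x ⟨k, hk⟩
    rw [mem_s17_iff] at hk
    subst hk
    fin_cases k
    · exact ⟨0, rfl⟩
    · exact ⟨1, rfl⟩
    · exact ⟨2, rfl⟩
  hnomo := by
    rintro _ ⟨i, rfl⟩
    exact espTree_noMo i
  hdedup := by
    rintro _ ⟨i, rfl⟩ _ ⟨j, rfl⟩ h hne
    rw [espTree_dedup i j h hne]
  hgrow := by
    rintro _ ⟨i, rfl⟩ e x hv
    cases hv with
    | grow _ he hx _ _ _ =>
      obtain ⟨j, hj⟩ := espTree_grow_closed i e x he (by rwa [← mem_nodes_iff])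
      exact ⟨_, ⟨j, rfl⟩, hj⟩
  hmerge := by
    rintro _ ⟨i, rfl⟩ _ ⟨j, rfl⟩ hv
    cases hv with
    | merge _ _ hr hn hs =>
      obtain ⟨k, hk⟩ := espTree_merge_closed i j hr
        (fun v hv => by
          rw [Finset.mem_inter, ← mem_nodes_iff, ← mem_nodes_iff] at hv
          exact Finset.mem_singleton.2 (hn hv))
        (fun k ⟨h₁, h₂⟩ => by
          have hk : k ∈ satP g17 s17 (espTree i) ∩ satP g17 s17 (espTree j) :=
            ⟨(mem_satP_iff _ _).2 h₁, (mem_satP_iff _ _).2 h₂⟩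
          rw [hs] at hk
          exact hk)
      exact ⟨_, ⟨k, rfl⟩, hk⟩

/-! ### The whole path is a CTP result -/

theorem nodeSet_univ : nodeSet g17 Finset.univ = Set.univ := by
  have h : ∀ v, ∃ e ∈ (Finset.univ : Finset (Fin 5)), v ∈ g17.ends e := by decide
  exact Set.eq_univ_of_forall h

theorem connectedEdges_univ : connectedEdges g17 Finset.univ := by
  have : Std.Symm (fun a b : Fin 6 =>
      ∃ e ∈ (Finset.univ : Finset (Fin 5)), g17.ends e = s(a, b)) :=
    ⟨fun a b ⟨e, he, h⟩ => ⟨e, he, h.trans Sym2.eq_swap⟩⟩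
  have h0 : ∀ v : Fin 6, Relation.ReflTransGen (fun a b : Fin 6 =>
      ∃ e ∈ (Finset.univ : Finset (Fin 5)), g17.ends e = s(a, b)) 0 v := by
    intro v
    induction v using Fin.induction with
    | zero => exact .refl
    | succ i ih => exact ih.tail ⟨i, Finset.mem_univ i, rfl⟩
  intro x _ y _
  exact (Relation.ReflTransGen.stdSymm.symm _ _ (h0 x)).trans (h0 y)

/-- Without the edge `e`, no node after `e` can be reached from the first node. -/
theorem le_of_reach_erase (e : Fin 5) {v : Fin 6}
    (h : Relation.ReflTransGen
      (fun a b => ∃ f ∈ (Finset.univ : Finset (Fin 5)).erase e, g17.ends f = s(a, b)) 0 v) :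
    v ≤ e.castSucc := by
  have step : ∀ e : Fin 5, ∀ a b : Fin 6, a ≤ e.castSucc →
      (∃ f ∈ (Finset.univ : Finset (Fin 5)).erase e, g17.ends f = s(a, b)) →
      b ≤ e.castSucc := by decide
  induction h with
  | refl => exact Fin.zero_le _
  | tail _ hab ih => exact step e _ _ ih hab

theorem isCTPResult_univ : IsCTPResult g17 s17 ⟨Finset.univ, 0⟩ := by
  have hmem : ∀ v, v ∈ RTree.nodes g17 ⟨Finset.univ, 0⟩ := fun v =>
    Or.inr (nodeSet_univ ▸ Set.mem_univ v)
  refine ⟨⟨⟨connectedEdges_univ, fun _ => ?_⟩, fun _ => nodeSet_univ ▸ Set.mem_univ _⟩, ?_, ?_⟩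
  · simp [nodeSet_univ, Set.ncard_univ]
  · intro i
    exact ⟨seed17 i, ⟨hmem _, (mem_s17_iff _ _).2 rfl⟩, fun v hv => (mem_s17_iff _ _).1 hv.2⟩
  · intro e _
    by_cases h0 : (0 : Fin 6) ∈ nodeSet g17 (Finset.univ.erase e)
    · by_cases h5 : (5 : Fin 6) ∈ nodeSet g17 (Finset.univ.erase e)
      · left
        intro hc
        have hle : ∀ e : Fin 5, ¬ (5 : Fin 6) ≤ e.castSucc := by decide
        exact hle e (le_of_reach_erase e (hc 0 h0 5 h5))
      · exact Or.inr ⟨2, 5, (mem_s17_iff _ _).2 rfl, hmem _, h5⟩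
    · exact Or.inr ⟨0, 0, (mem_s17_iff _ _).2 rfl, hmem _, h0⟩

/-- ESP is incomplete for 3 seed sets: on the path graph
`A–1–2–B–3–C` with seeds `{A},{B},{C}`, the tree of all five edges is a CTP
result, yet there exists an ESP execution in which no CTP result is reported
(no built tree contains a seed from every seed set). -/
theorem esp_incomplete_three_seed_sets :
    IsCTPResult g17 s17 ⟨Finset.univ, 0⟩ ∧
    ∃ R : ESPRun g17 s17, ∀ p ∈ R.built, ¬ ∀ i, ∃ v ∈ p.nodes g17, v ∈ s17 i := by
  refine ⟨isCTPResult_univ, espRun, ?_⟩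
  rintro _ ⟨i, rfl⟩ h
  exact espTree_not_full i fun k => (mem_satP_iff _ _).1 (h k)
end
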